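/- Let β > 0, T > 0, h = T/(N+1), t_j = jh, and let y : [0,T] → ℝ be twice continuously differentiable. For each j let L¹_j y denote the linear interpolant of y at t_j and t_{j+1}, i.e. L¹_j y(t) = ((t_{j+1}−t)/h) y(t_j) + ((t−t_j)/h) y(t_{j+1}). Then for every 0 ≤ n ≤ N the truncation error Tₙ₊₁ = β Σ_{j=0}^{n} ∫_{t_j}^{t_{j+1}} (y(s) − L¹_j y(s)) exp(−β(t_{n+1}−s)) ds satisfies |Tₙ₊₁| ≤ (‖y″‖_∞ / 2) (1 − exp(−β t_{n+1})) h², where ‖y″‖_∞ = sup_{t∈[0,T]} |y″(t)|. -/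

import Mathlib

open Real MeasureTheory Finset

/-!
A lower bound `-M ≤ f''` makes `f` strongly convex with the (negative) modulus `-M`, and strong
convexity compares `f` with its chord: on `[a, b]` the function exceeds the linear interpolant by at
most `M / 2 * (s - a) * (b - s) ≤ M / 8 * (b - a) ^ 2`. Applied to `f` and `-f`, this bounds the
interpolation error on every cell of the grid. The kernel `exp (-β * (c - s))` is positive, so the
errors of the cells add up to at most this bound times the integral of the kernel over the whole
grid, and `β` times that integral is `1 - exp (-β * (c - a))`.
-/

/-- The chord of `f` over `[a, b]`, i.e. the Lagrange interpolant of `f` at the nodes `a` and `b`,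
evaluated at `s`. The nodes are meant to be distinct: for `a = b` the value is `0`. -/
noncomputable def linearInterpolant (f : ℝ → ℝ) (a b s : ℝ) : ℝ :=
  (b - s) / (b - a) * f a + (s - a) / (b - a) * f b

theorem linearInterpolant_neg (f : ℝ → ℝ) (a b s : ℝ) :
    linearInterpolant (-f) a b s = -linearInterpolant f a b s := by
  simp only [linearInterpolant, Pi.neg_apply]
  ring

section InterpolationError

variable {f f' f'' : ℝ → ℝ} {a b h m M s : ℝ}

theorem strongConvexOn_of_hasDerivAt2_ge {D : Set ℝ} (hD : Convex ℝ D) (hf : ContinuousOn f D)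
    (hf' : ∀ x ∈ interior D, HasDerivAt f (f' x) x)
    (hf'' : ∀ x ∈ interior D, HasDerivAt f' (f'' x) x)
    (hm : ∀ x ∈ interior D, m ≤ f'' x) : StrongConvexOn D m f := by
  simp only [strongConvexOn_iff_convex, Real.norm_eq_abs, sq_abs]
  refine convexOn_of_hasDerivWithinAt2_nonneg hD (hf.sub (by fun_prop))
    (f' := fun x ↦ f' x - m * x) (f'' := fun x ↦ f'' x - m) (fun x hx ↦ ?_) (fun x hx ↦ ?_)
    fun x hx ↦ sub_nonneg.2 (hm x hx)
  · have hsq : HasDerivAt (fun x : ℝ ↦ m / 2 * x ^ 2) (m * x) x :=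
      ((hasDerivAt_pow 2 x).const_mul (m / 2)).congr_deriv (by norm_num; ring)
    exact ((hf' x hx).sub hsq).hasDerivWithinAt
  · exact ((hf'' x hx).sub (hasDerivAt_const_mul m)).hasDerivWithinAt

theorem le_linearInterpolant_of_strongConvexOn (hf : StrongConvexOn (Set.Icc a b) m f)
    (hab : a < b) (hs : s ∈ Set.Icc a b) :
    f s ≤ linearInterpolant f a b s - m / 2 * ((s - a) * (b - s)) := by
  have hlen : 0 < b - a := sub_pos.2 hab
  have hconv := hf.2 (Set.left_mem_Icc.2 hab.le) (Set.right_mem_Icc.2 hab.le)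
    (div_nonneg (sub_nonneg.2 hs.2) hlen.le) (div_nonneg (sub_nonneg.2 hs.1) hlen.le)
    (by field_simp; ring)
  have hpoint : (b - s) / (b - a) * a + (s - a) / (b - a) * b = s := by field_simp; ring
  have hmodulus : (b - s) / (b - a) * ((s - a) / (b - a)) * (m / 2 * ‖a - b‖ ^ 2)
      = m / 2 * ((s - a) * (b - s)) := by
    rw [Real.norm_eq_abs, sq_abs, ← neg_sq, neg_sub]
    field_simp
  rwa [smul_eq_mul, smul_eq_mul, smul_eq_mul, smul_eq_mul, hpoint, hmodulus] at hconv

theorem abs_sub_linearInterpolant_le (hab : a < b) (hf : ContinuousOn f (Set.Icc a b))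
    (hf' : ∀ x ∈ Set.Ioo a b, HasDerivAt f (f' x) x)
    (hf'' : ∀ x ∈ Set.Ioo a b, HasDerivAt f' (f'' x) x)
    (hM : ∀ x ∈ Set.Ioo a b, |f'' x| ≤ M) (hs : s ∈ Set.Icc a b) :
    |f s - linearInterpolant f a b s| ≤ M / 2 * ((s - a) * (b - s)) := by
  rw [← interior_Icc] at hf' hf'' hM
  have hupper := le_linearInterpolant_of_strongConvexOn
    (strongConvexOn_of_hasDerivAt2_ge (convex_Icc a b) hf hf' hf''
      fun x hx ↦ neg_le_of_abs_le (hM x hx)) hab hs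
  have hlower := le_linearInterpolant_of_strongConvexOn
    (strongConvexOn_of_hasDerivAt2_ge (convex_Icc a b) hf.neg (fun x hx ↦ (hf' x hx).neg)
      (fun x hx ↦ (hf'' x hx).neg) fun x hx ↦ neg_le_neg (le_of_abs_le (hM x hx))) hab hs
  rw [linearInterpolant_neg, Pi.neg_apply] at hlower
  exact abs_le.2 ⟨by linarith, by linarith⟩

theorem abs_sub_linearInterpolant_le_sq (hab : a < b) (hh : b - a ≤ h)
    (hf : ContinuousOn f (Set.Icc a b)) (hf' : ∀ x ∈ Set.Ioo a b, HasDerivAt f (f' x) x)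
    (hf'' : ∀ x ∈ Set.Ioo a b, HasDerivAt f' (f'' x) x)
    (hM : ∀ x ∈ Set.Ioo a b, |f'' x| ≤ M) (hs : s ∈ Set.Icc a b) :
    |f s - linearInterpolant f a b s| ≤ M / 8 * h ^ 2 := by
  obtain ⟨x, hx⟩ := Set.nonempty_Ioo.2 hab
  have hM₀ : 0 ≤ M := (abs_nonneg _).trans (hM x hx)
  have hamgm : (s - a) * (b - s) ≤ h ^ 2 / 4 := calc
    (s - a) * (b - s) ≤ (b - a) ^ 2 / 4 := by linarith [sq_nonneg ((s - a) - (b - s))]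
    _ ≤ h ^ 2 / 4 := by linarith [pow_le_pow_left₀ (sub_nonneg.2 hab.le) hh 2]
  calc |f s - linearInterpolant f a b s|
      ≤ M / 2 * ((s - a) * (b - s)) := abs_sub_linearInterpolant_le hab hf hf' hf'' hM hs
    _ ≤ M / 2 * (h ^ 2 / 4) := mul_le_mul_of_nonneg_left hamgm (by positivity)
    _ = M / 8 * h ^ 2 := by ring

end InterpolationError

theorem norm_sum_integral_adjacent_intervals_le {E : Type*} [NormedAddCommGroup E]
    [NormedSpace ℝ E] {μ : Measure ℝ} {f : ℕ → ℝ → E} {g : ℝ → ℝ} {t : ℕ → ℝ} {n : ℕ}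
    (ht : MonotoneOn t (Set.Iic n))
    (hg : ∀ j < n, IntervalIntegrable g μ (t j) (t (j + 1)))
    (hfg : ∀ j < n, ∀ s ∈ Set.Ioc (t j) (t (j + 1)), ‖f j s‖ ≤ g s) :
    ‖∑ j ∈ range n, ∫ s in t j..t (j + 1), f j s ∂μ‖ ≤ ∫ s in t 0..t n, g s ∂μ := by
  rw [← intervalIntegral.sum_integral_adjacent_intervals hg]
  refine norm_sum_le_of_le _ fun j hj ↦ ?_
  have hjn : j < n := mem_range.1 hj
  exact intervalIntegral.norm_integral_le_of_norm_le (ht hjn.le hjn j.le_succ)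
    (Filter.Eventually.of_forall (hfg j hjn)) (hg j hjn)

theorem mul_integral_exp_neg_mul_sub (β a c : ℝ) :
    β * ∫ s in a..c, exp (-β * (c - s)) = 1 - exp (-β * (c - a)) := by
  have hkernel (s : ℝ) : -β * (c - s) = β * s - β * c := by ring
  simp only [hkernel, intervalIntegral.mul_integral_comp_mul_sub, integral_exp, sub_self, exp_zero]

theorem hasDerivAt_iteratedDerivWithin {𝕜 F : Type*} [NontriviallyNormedField 𝕜]
    [NormedAddCommGroup F] [NormedSpace 𝕜 F] {f : 𝕜 → F} {s : Set 𝕜} {x : 𝕜} {n : WithTop ℕ∞}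
    {k : ℕ} (hf : ContDiffOn 𝕜 n f s) (hk : k < n) (hs : UniqueDiffOn 𝕜 s) (hx : s ∈ nhds x) :
    HasDerivAt (iteratedDerivWithin k f s) (iteratedDerivWithin (k + 1) f s x) x := by
  rw [iteratedDerivWithin_succ]
  exact ((hf.differentiableOn_iteratedDerivWithin hk hs x
    (mem_of_mem_nhds hx)).hasDerivWithinAt).hasDerivAt hx

theorem linear_truncation_error_general {β h M : ℝ} {y y' y'' : ℝ → ℝ} {t : ℕ → ℝ} {n : ℕ}
    (ht : StrictMonoOn t (Set.Iic n)) (hh : ∀ j < n, t (j + 1) - t j ≤ h)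
    (hy : ∀ j < n, ContinuousOn y (Set.Icc (t j) (t (j + 1))))
    (hy' : ∀ j < n, ∀ x ∈ Set.Ioo (t j) (t (j + 1)), HasDerivAt y (y' x) x)
    (hy'' : ∀ j < n, ∀ x ∈ Set.Ioo (t j) (t (j + 1)), HasDerivAt y' (y'' x) x)
    (hM : ∀ j < n, ∀ x ∈ Set.Ioo (t j) (t (j + 1)), |y'' x| ≤ M) :
    |β * ∑ j ∈ range n, ∫ s in t j..t (j + 1),
        (y s - linearInterpolant y (t j) (t (j + 1)) s) * exp (-β * (t n - s))|
      ≤ M / 8 * |1 - exp (-β * (t n - t 0))| * h ^ 2 := by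
  have hcell : ∀ j < n, ∀ s ∈ Set.Ioc (t j) (t (j + 1)),
      ‖(y s - linearInterpolant y (t j) (t (j + 1)) s) * exp (-β * (t n - s))‖
        ≤ M / 8 * h ^ 2 * exp (-β * (t n - s)) := fun j hj s hs ↦ by
    rw [norm_mul, Real.norm_eq_abs, Real.norm_of_nonneg (exp_pos _).le]
    gcongr
    exact abs_sub_linearInterpolant_le_sq (ht hj.le hj j.lt_succ_self) (hh j hj) (hy j hj)
      (hy' j hj) (hy'' j hj) (hM j hj) (Set.Ioc_subset_Icc_self hs)
  have hkernel : 0 ≤ ∫ s in t 0..t n, exp (-β * (t n - s)) :=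
    intervalIntegral.integral_nonneg (ht.monotoneOn n.zero_le Set.self_mem_Iic n.zero_le)
      fun s _ ↦ (exp_pos _).le
  have hsum := norm_sum_integral_adjacent_intervals_le (μ := volume) ht.monotoneOn
    (fun j _ ↦ Continuous.intervalIntegrable (by fun_prop) _ _) hcell
  rw [intervalIntegral.integral_const_mul] at hsum
  calc _ ≤ |β| * (M / 8 * h ^ 2 * ∫ s in t 0..t n, exp (-β * (t n - s))) := by
        rw [abs_mul]
        gcongr
        exact hsum
    _ = M / 8 * |β * ∫ s in t 0..t n, exp (-β * (t n - s))| * h ^ 2 := by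
        rw [abs_mul, abs_of_nonneg hkernel]
        ring
    _ = _ := by rw [mul_integral_exp_neg_mul_sub]

theorem linear_truncation_error_of_contDiffOn {β a b h : ℝ} {y : ℝ → ℝ} {t : ℕ → ℝ} {n : ℕ}
    (hab : a < b) (hy : ContDiffOn ℝ 2 y (Set.Icc a b)) (ht : StrictMonoOn t (Set.Iic n))
    (hh : ∀ j < n, t (j + 1) - t j ≤ h) (ha : a ≤ t 0) (hb : t n ≤ b) :
    |β * ∑ j ∈ range n, ∫ s in t j..t (j + 1),
        (y s - linearInterpolant y (t j) (t (j + 1)) s) * exp (-β * (t n - s))|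
      ≤ sSup ((fun x ↦ |iteratedDerivWithin 2 y (Set.Icc a b) x|) '' Set.Icc a b) / 8
        * |1 - exp (-β * (t n - t 0))| * h ^ 2 := by
  have hu : UniqueDiffOn ℝ (Set.Icc a b) := uniqueDiffOn_Icc hab
  have hcell : ∀ j < n, Set.Icc (t j) (t (j + 1)) ⊆ Set.Icc a b := fun j hj ↦
    Set.Icc_subset_Icc (ha.trans (ht.monotoneOn n.zero_le hj.le j.zero_le))
      ((ht.monotoneOn hj Set.self_mem_Iic hj).trans hb)
  have hderiv (k : ℕ) (hk : (k : WithTop ℕ∞) < 2) : ∀ j < n, ∀ x ∈ Set.Ioo (t j) (t (j + 1)),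
      HasDerivAt (iteratedDerivWithin k y (Set.Icc a b))
        (iteratedDerivWithin (k + 1) y (Set.Icc a b) x) x := fun j hj x hx ↦
    hasDerivAt_iteratedDerivWithin hy hk hu
      (Filter.mem_of_superset (Icc_mem_nhds hx.1 hx.2) (hcell j hj))
  have hy' := hderiv 0 (by norm_num)
  rw [iteratedDerivWithin_zero] at hy'
  exact linear_truncation_error_general ht hh (fun j hj ↦ hy.continuousOn.mono (hcell j hj))
    hy' (hderiv 1 (by norm_num)) fun j hj x hx ↦
      (hy.continuousOn_iteratedDerivWithin le_rfl hu).abs.le_sSup_image_Icc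
        (hcell j hj (Set.Ioo_subset_Icc_self hx))

/-- Truncation error of the linear-interpolation quadrature for the exponential-kernel
Volterra integral: `|Tₙ₊₁| ≤ (‖y″‖_∞/2) (1 - exp(-β tₙ₊₁)) h²`. -/
theorem linear_truncation_error
    (β T : ℝ) (N : ℕ) (h : ℝ) (hβ : 0 < β) (hT : 0 < T) (hh : h = T / (N + 1))
    (y : ℝ → ℝ) (hy : ContDiffOn ℝ 2 y (Set.Icc 0 T)) :
    ∀ n ≤ N,
      |β * ∑ j ∈ Finset.range (n + 1),
          ∫ s in ((j : ℝ) * h)..(((j : ℝ) + 1) * h),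
            (y s - (((((j : ℝ) + 1) * h - s) / h) * y ((j : ℝ) * h)
              + ((s - (j : ℝ) * h) / h) * y (((j : ℝ) + 1) * h)))
              * Real.exp (-β * (((n : ℝ) + 1) * h - s))|
        ≤ (sSup ((fun t => |iteratedDerivWithin 2 y (Set.Icc (0 : ℝ) T) t|) ''
              Set.Icc (0 : ℝ) T) / 2)
            * (1 - Real.exp (-β * (((n : ℝ) + 1) * h))) * h ^ 2 := by
  intro n hn
  have hh₀ : 0 < h := by rw [hh]; positivity
  have hend : ((n + 1 : ℕ) : ℝ) * h ≤ T := calc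
    ((n + 1 : ℕ) : ℝ) * h ≤ (N + 1 : ℕ) * h := by gcongr
    _ = T := by rw [hh]; push_cast; field_simp
  have hlen (j : ℕ) : ((j : ℝ) + 1) * h - j * h = h := by ring
  have hexp : 0 ≤ 1 - exp (-β * (((n : ℝ) + 1) * h)) := by
    rw [sub_nonneg, exp_le_one_iff, neg_mul, neg_nonpos]
    positivity
  have hbound := linear_truncation_error_of_contDiffOn (β := β) (h := h) hT hy
    ((Nat.strictMono_cast.mul_const hh₀).strictMonoOn (Set.Iic (n + 1)))
    (fun j _ ↦ by rw [Nat.cast_succ, hlen]) (by simp) hend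
  simp only [linearInterpolant, Nat.cast_add, Nat.cast_one, Nat.cast_zero, zero_mul, sub_zero,
    hlen, abs_of_nonneg hexp] at hbound
  refine hbound.trans ?_
  gcongr ?_ * _ * _
  exact div_le_div_of_nonneg_left (Real.sSup_nonneg (by rintro _ ⟨x, _, rfl⟩; exact abs_nonneg _))
    two_pos (by norm_num)
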